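/- Breakthrough scenario lemma (Lemma 2.3): Let θ : ℝ^d × [0,∞) → ℝ be smooth and periodic in space, and let ω(ξ,t) be continuous in (ξ,t), such that for each fixed t ≥ 0 the function ω(·,t) is a modulus of continuity with ∂²_{ξξ}ω(0,t) = −∞ (the second derivative tends to −∞ as ξ → 0+ whenever the one-sided first derivative at 0 is finite). Suppose θ(·,0) obeys ω(·,0), but for some t > 0 the function θ(·,t) does not obey ω(·,t). Then there exist t₁ > 0 and points x ≠ y such that θ(·,t) obeys ω(·,t) for all t < t₁, while θ(x,t₁) − θ(y,t₁) = ω(|x−y|, t₁). -/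

import Mathlib

open Set MeasureTheory Filter Topology

/-- A modulus of continuity: `ω 0 = 0`, continuous, increasing and concave on `[0,∞)`,
and piecewise `C¹` on `(0,∞)`. -/
def IsModulusOfContinuity (ω : ℝ → ℝ) : Prop :=
  ω 0 = 0 ∧ ContinuousOn ω (Ici 0) ∧ StrictMonoOn ω (Ici 0) ∧ ConcaveOn ℝ (Ici 0) ω ∧
  ∃ S : Finset ℝ, (∀ ξ ∈ Ioi (0:ℝ) \ ↑S, DifferentiableAt ℝ ω ξ) ∧
    ContinuousOn (deriv ω) (Ioi (0:ℝ) \ ↑S)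

/-- For a concave function vanishing at `0`, the ratio `φ h / h` is antitone, in product form. -/
theorem ConcaveOn.mul_le_mul_of_zero {φ : ℝ → ℝ} {s : Set ℝ} (hφ : ConcaveOn ℝ s φ)
    (h0 : (0 : ℝ) ∈ s) (hφ0 : φ 0 = 0) {a b : ℝ} (ha : 0 < a) (hab : a ≤ b) (has : a ∈ s)
    (hbs : b ∈ s) : φ b * a ≤ φ a * b := by
  have hb : 0 < b := ha.trans_le hab
  have h := hφ.slope_anti h0 ⟨has, ha.ne'⟩ ⟨hbs, hb.ne'⟩ hab
  simp only [slope_def_field, hφ0, sub_zero] at h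
  rwa [div_le_div_iff₀ hb ha] at h

/-- A modulus of continuity dominated by a linear function has a one-sided derivative at `0`. -/
theorem IsModulusOfContinuity.exists_hasDerivWithinAt {W : ℝ → ℝ} (hW : IsModulusOfContinuity W)
    {G : ℝ} (hG : ∀ h > 0, W h ≤ G * h) : ∃ b, HasDerivWithinAt W b (Ici 0) 0 := by
  obtain ⟨h0, -, -, hconc, -⟩ := hW
  have hanti : AntitoneOn (slope W 0) (Ioi 0) :=
    (hconc.slope_anti self_mem_Ici).mono fun x hx => ⟨mem_Ici_of_Ioi hx, ne_of_gt hx⟩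
  have hbdd : BddAbove (slope W 0 '' Ioi 0) := by
    refine ⟨G, ?_⟩
    rintro _ ⟨h, hh, rfl⟩
    rw [slope_def_field, h0, sub_zero, sub_zero, div_le_iff₀ hh]
    exact hG h hh
  exact ⟨_, ((hasDerivWithinAt_iff_tendsto_slope' self_notMem_Ioi).2
    (hanti.tendsto_nhdsGT hbdd)).Ici_of_Ioi⟩

/-- If `W'' → -∞` at `0`, a linear bound on `W` improves by any quadratic term near `0`. -/
theorem IsModulusOfContinuity.exists_add_sq_le {W : ℝ → ℝ} (hW : IsModulusOfContinuity W)
    (hW'' : Tendsto (fun ξ => deriv (deriv W) ξ) (𝓝[>] 0) atBot)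
    {G : ℝ} (hG : ∀ h > 0, W h ≤ G * h) (M : ℝ) :
    ∃ δ > 0, ∀ h ∈ Ioo 0 δ, W h + M * h ^ 2 ≤ G * h := by
  obtain ⟨h0, hcont, -, -, S, hS, -⟩ := hW
  have hSev : ∀ᶠ ξ in 𝓝[>] (0 : ℝ), ξ ∉ (S : Set ℝ) := by
    have hfin : ((S : Set ℝ) \ {0}).Finite := S.finite_toSet.subset sdiff_subset
    have h1 : ∀ᶠ ξ in 𝓝 (0 : ℝ), ξ ∉ (S : Set ℝ) \ {0} :=
      hfin.isClosed.isOpen_compl.mem_nhds (by simp)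
    filter_upwards [nhdsWithin_le_nhds h1, self_mem_nhdsWithin] with ξ h2 h3 h4
    exact h2 ⟨h4, ne_of_gt h3⟩
  have hev := hSev.and (hW''.eventually (eventually_lt_atBot (min 0 (-(2 * M)))))
  obtain ⟨δ, hδ, hsub⟩ := mem_nhdsGT_iff_exists_Ioo_subset.1 hev
  have hδ' : 0 < δ := hδ
  have hdiff : ∀ ξ ∈ Ioo 0 δ, DifferentiableAt ℝ W ξ := fun ξ hξ => hS ξ ⟨hξ.1, (hsub hξ).1⟩
  have hdiff2 : ∀ ξ ∈ Ioo 0 δ, DifferentiableAt ℝ (deriv W) ξ := fun ξ hξ =>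
    differentiableAt_of_deriv_ne_zero ((hsub hξ).2.trans_le (min_le_left _ _)).ne
  set φ : ℝ → ℝ := fun h => W h + M * h ^ 2 with hφdef
  have hφ' : ∀ ξ ∈ Ioo 0 δ, HasDerivAt φ (deriv W ξ + M * (2 * ξ)) ξ := fun ξ hξ => by
    simpa using (hdiff ξ hξ).hasDerivAt.fun_add ((hasDerivAt_pow 2 ξ).const_mul M)
  have hφ'' : ∀ ξ ∈ Ioo 0 δ, HasDerivAt (deriv φ) (deriv (deriv W) ξ + M * 2) ξ := fun ξ hξ => by
    have h1 : HasDerivAt (fun ξ => deriv W ξ + M * (2 * ξ)) (deriv (deriv W) ξ + M * 2) ξ := by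
      simpa using (hdiff2 ξ hξ).hasDerivAt.fun_add (((hasDerivAt_id ξ).const_mul 2).const_mul M)
    refine h1.congr_of_eventuallyEq ?_
    filter_upwards [isOpen_Ioo.mem_nhds hξ] with z hz using (hφ' z hz).deriv
  have hconc : ConcaveOn ℝ (Ico 0 δ) φ := by
    refine concaveOn_of_deriv2_nonpos (convex_Ico 0 δ) ?_ ?_ ?_ ?_
    · exact (hcont.mono Ico_subset_Ici_self).add (by fun_prop)
    · rw [interior_Ico]
      exact fun ξ hξ => (hφ' ξ hξ).differentiableAt.differentiableWithinAt
    · rw [interior_Ico]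
      exact fun ξ hξ => (hφ'' ξ hξ).differentiableAt.differentiableWithinAt
    · rw [interior_Ico]
      intro ξ hξ
      have h1 : deriv^[2] φ ξ = deriv (deriv W) ξ + M * 2 := (hφ'' ξ hξ).deriv
      have h2 := (hsub hξ).2.trans_le (min_le_right _ _)
      rw [h1]
      linarith
  refine ⟨δ, hδ', fun h hh => ?_⟩
  have hlim : Tendsto (fun s : ℝ => (G + M * s) * h) (𝓝[>] 0) (𝓝 ((G + M * 0) * h)) :=
    Tendsto.mono_left (Continuous.tendsto (by fun_prop) 0) nhdsWithin_le_nhds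
  rw [mul_zero, add_zero] at hlim
  refine ge_of_tendsto hlim ?_
  filter_upwards [Ioo_mem_nhdsGT hh.1] with s hs
  have h1 : φ h * s ≤ φ s * h := hconc.mul_le_mul_of_zero ⟨le_rfl, hδ'⟩ (by simp [hφdef, h0]) hs.1
    hs.2.le ⟨hs.1.le, hs.2.trans hh.2⟩ ⟨hh.1.le, hh.2⟩
  have h2 : φ s * h ≤ (G + M * s) * h * s := by
    have h3 : φ s ≤ (G + M * s) * s := by
      have := hG s hs.1
      simp only [hφdef]
      nlinarith
    nlinarith [mul_le_mul_of_nonneg_right h3 hh.1.le]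
  exact le_of_mul_le_mul_right (h1.trans h2) hs.1

/-- A twice continuously differentiable function agrees with its affine approximation up to a
quadratic error. -/
theorem ContDiff.exists_norm_sub_le_sq {E : Type*} [NormedAddCommGroup E] [NormedSpace ℝ E]
    {f : E → ℝ} (hf : ContDiff ℝ 2 f) (x : E) :
    ∃ C : ℝ, ∃ r > 0, ∀ v : E, ‖v‖ < r → ‖f (x + v) - f x - fderiv ℝ f x v‖ ≤ C * ‖v‖ ^ 2 := by
  have hf' : ContDiff ℝ 1 (fderiv ℝ f) := hf.fderiv_right (by norm_num)
  obtain ⟨K, t, ht, hK⟩ := hf'.contDiffAt (x := x).exists_lipschitzOnWith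
  obtain ⟨r, hr, hrt⟩ := Metric.mem_nhds_iff.1 ht
  refine ⟨K, r, hr, fun v hv => ?_⟩
  have hsub : Metric.closedBall x ‖v‖ ⊆ t := (Metric.closedBall_subset_ball hv).trans hrt
  have key := Convex.norm_image_sub_le_of_norm_hasFDerivWithin_le' (𝕜 := ℝ) (f := f)
    (f' := fderiv ℝ f) (φ := fderiv ℝ f x) (C := K * ‖v‖) (s := Metric.closedBall x ‖v‖)
    (x := x) (y := x + v)
    (fun z _ => (hf.differentiable (by norm_num) z).hasFDerivAt.hasFDerivWithinAt)
    (fun z hz => ?_) (convex_closedBall x _) (by simp) (by simp)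
  · rw [add_sub_cancel_left] at key
    rw [pow_two, ← mul_assoc]
    exact key
  · refine (hK.norm_sub_le (hsub hz) (hrt (Metric.mem_ball_self hr))).trans ?_
    gcongr
    simpa [dist_eq_norm] using hz

/-- If `f` obeys a modulus of continuity `W` with `W''(0) = -∞`, the gradient of `f` is strictly
smaller than `W'(0)`. -/
theorem IsModulusOfContinuity.exists_norm_fderiv_mul_lt {E : Type*} [NormedAddCommGroup E]
    [InnerProductSpace ℝ E] [CompleteSpace E] {W : ℝ → ℝ} (hW : IsModulusOfContinuity W)
    (hW'' : (∃ b, HasDerivWithinAt W b (Ici 0) 0) →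
      Tendsto (fun ξ => deriv (deriv W) ξ) (𝓝[>] 0) atBot)
    {f : E → ℝ} (hf : ContDiff ℝ 2 f)
    (hobeys : ∀ x y, x ≠ y → |f x - f y| < W (dist x y)) (x : E) :
    ∃ h > 0, ‖fderiv ℝ f x‖ * h < W h := by
  by_contra! hG
  set G := ‖fderiv ℝ f x‖
  have hGpos : 0 < G := by
    have h1 : 0 < W 1 := hW.1 ▸ hW.2.2.1 self_mem_Ici (mem_Ici.2 zero_le_one) one_pos
    linarith [hG 1 one_pos]
  obtain ⟨C, r, hr, hC⟩ := hf.exists_norm_sub_le_sq x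
  obtain ⟨δ, hδ, hM⟩ := hW.exists_add_sq_le (hW'' (hW.exists_hasDerivWithinAt hG)) hG C
  set g : E := (InnerProductSpace.toDual ℝ E).symm (fderiv ℝ f x) with hg
  have hgnorm : ‖g‖ = G := by rw [hg, LinearIsometryEquiv.norm_map]
  have hgG : fderiv ℝ f x g = G ^ 2 := by
    rw [← InnerProductSpace.toDual_symm_apply, ← hg, real_inner_self_eq_norm_sq, hgnorm]
  obtain ⟨h, hh0, hh⟩ := exists_between (lt_min hr hδ)
  obtain ⟨hhr, hhδ⟩ := lt_min_iff.1 hh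
  set v : E := (h / G) • g with hv
  have hvnorm : ‖v‖ = h := by
    rw [hv, norm_smul, hgnorm, Real.norm_of_nonneg (by positivity), div_mul_cancel₀ _ hGpos.ne']
  have hvG : fderiv ℝ f x v = G * h := by
    rw [hv, map_smul, hgG, smul_eq_mul]
    field_simp
  have hne : x + v ≠ x := by
    intro h1
    have : v = 0 := by simpa using h1
    rw [this, norm_zero] at hvnorm
    exact hh0.ne hvnorm
  have h1 := hobeys (x + v) x hne
  rw [dist_self_add_left, hvnorm] at h1
  have h2 := hC v (hvnorm ▸ hhr)
  rw [hvG, hvnorm, Real.norm_eq_abs] at h2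
  linarith [hM h ⟨hh0, hhδ⟩, (abs_lt.1 h1).2, (abs_le.1 h2).1]

/-- Two points can be moved by periods into a fixed bounded box without increasing their
distance. -/
theorem exists_translate_mem_box {d : ℕ} {L : ℝ} (hL : 0 < L) (x y : EuclideanSpace ℝ (Fin d)) :
    ∃ v w : Fin d → ℤ, ∃ x' y' : EuclideanSpace ℝ (Fin d),
      x' = x + WithLp.toLp 2 (fun i => L * (v i : ℝ)) ∧
      y' = y + WithLp.toLp 2 (fun i => L * (w i : ℝ)) ∧
      (∀ i, x' i ∈ Icc (-(2 * L)) (2 * L)) ∧ (∀ i, y' i ∈ Icc (-(2 * L)) (2 * L)) ∧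
      dist x' y' ≤ dist x y := by
  set v : Fin d → ℤ := fun i => -⌊x i / L⌋ with hv
  set w : Fin d → ℤ := fun i => v i + round ((x i - y i) / L) with hw
  have hscale : ∀ (a : ℝ) (n : ℤ), |a - L * n| = L * |a / L - n| := fun a n => by
    rw [← abs_of_pos hL, ← abs_mul, abs_of_pos hL, mul_sub, mul_div_cancel₀ _ hL.ne']
  have hdiff : ∀ i, (x i + L * (v i : ℝ)) - (y i + L * (w i : ℝ)) =
      (x i - y i) - L * (round ((x i - y i) / L) : ℤ) := fun i => by
    simp only [hw]
    push_cast
    ring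
  have hx : ∀ i, 0 ≤ x i + L * (v i : ℝ) ∧ x i + L * (v i : ℝ) ≤ L := fun i => by
    have h1 := Int.floor_le (x i / L)
    have h2 := (Int.lt_floor_add_one (x i / L)).le
    rw [le_div_iff₀ hL] at h1
    rw [div_le_iff₀ hL] at h2
    simp only [hv]
    push_cast
    constructor <;> linarith
  refine ⟨v, w, _, _, rfl, rfl, fun i => ?_, fun i => ?_, ?_⟩
  · have := hx i
    constructor <;> simp only [PiLp.add_apply] <;> linarith
  · have h1 := hx i
    have h2 : |(x i + L * (v i : ℝ)) - (y i + L * (w i : ℝ))| ≤ L := by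
      rw [hdiff, hscale]
      have := abs_sub_round ((x i - y i) / L)
      nlinarith
    have h3 := abs_le.1 h2
    constructor <;> simp only [PiLp.add_apply] <;> linarith
  · rw [EuclideanSpace.dist_eq, EuclideanSpace.dist_eq]
    gcongr with i
    simp only [PiLp.add_apply, Real.dist_eq]
    rw [hdiff, hscale]
    have h1 := round_le ((x i - y i) / L) 0
    have h2 := hscale (x i - y i) 0
    simp only [Int.cast_zero, mul_zero, sub_zero] at h1 h2
    rw [h2]
    gcongr

/-- The spatial slices of a function smooth on `E × [0,∞)` are smooth. -/
theorem ContDiffOn.contDiff_slice {E : Type*} [NormedAddCommGroup E] [NormedSpace ℝ E]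
    {θ : E → ℝ → ℝ} {n : WithTop ℕ∞}
    (hθ : ContDiffOn ℝ n (fun p : E × ℝ => θ p.1 p.2) (univ ×ˢ Ici 0)) {t : ℝ} (ht : 0 ≤ t) :
    ContDiff ℝ n (fun x => θ x t) := by
  rw [← contDiffOn_univ]
  exact hθ.comp (g := fun p : E × ℝ => θ p.1 p.2) (f := fun x : E => (x, t))
    (by fun_prop) fun x _ => ⟨mem_univ _, ht⟩

/-- The spatial derivative of a function smooth on `E × [0,∞)` is jointly continuous. -/
theorem ContDiffOn.continuousOn_fderiv_slice {E : Type*} [NormedAddCommGroup E] [NormedSpace ℝ E]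
    {θ : E → ℝ → ℝ} {n : WithTop ℕ∞} (hn : 1 ≤ n)
    (hθ : ContDiffOn ℝ n (fun p : E × ℝ => θ p.1 p.2) (univ ×ˢ Ici 0)) :
    ContinuousOn (fun p : E × ℝ => fderiv ℝ (fun x => θ x p.2) p.1) (univ ×ˢ Ici 0) := by
  have huniq : UniqueDiffOn ℝ ((univ : Set E) ×ˢ Ici (0 : ℝ)) :=
    uniqueDiffOn_univ.prod (uniqueDiffOn_Ici 0)
  have hcont := (hθ.continuousOn_fderivWithin huniq hn).clm_comp
    (continuousOn_const (c := ContinuousLinearMap.inl ℝ E ℝ))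
  refine hcont.congr fun p hp => ?_
  have h1 : HasFDerivWithinAt (fun q : E × ℝ => θ q.1 q.2) _ (univ ×ˢ Ici 0) (p.1, p.2) :=
    (hθ.differentiableOn (by positivity) p hp).hasFDerivWithinAt
  have h2 : HasFDerivWithinAt (fun x : E => (x, p.2)) (ContinuousLinearMap.inl ℝ E ℝ) univ p.1 :=
    (hasFDerivAt_prodMk_left p.1 p.2).hasFDerivWithinAt
  have hmaps : MapsTo (fun x : E => (x, p.2)) univ (univ ×ˢ Ici 0) := fun x _ => ⟨mem_univ _, hp.2⟩
  exact (hasFDerivWithinAt_univ.1 (h1.comp p.1 h2 hmaps)).fderiv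

/-- A linear bound on the spatial increments along a sequence of colliding points passes to
the modulus of continuity at the limiting time. -/
theorem le_norm_fderiv_mul_of_tendsto {E : Type*} [NormedAddCommGroup E] [NormedSpace ℝ E]
    {θ : E → ℝ → ℝ} {n : WithTop ℕ∞} (hn : 1 ≤ n)
    (hθ : ContDiffOn ℝ n (fun p : E × ℝ => θ p.1 p.2) (univ ×ˢ Ici 0))
    {ω : ℝ → ℝ → ℝ}
    (hωcont : ContinuousOn (fun p : ℝ × ℝ => ω p.1 p.2) (Ici 0 ×ˢ Ici 0))
    (hωmoc : ∀ t ∈ Ici (0:ℝ), IsModulusOfContinuity (fun ξ => ω ξ t))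
    {x y : ℕ → E} {t : ℕ → ℝ} {a : E} {t₀ : ℝ} (ht₀ : 0 ≤ t₀) (ht : ∀ n, 0 ≤ t n)
    (hxa : Tendsto x atTop (𝓝 a)) (hya : Tendsto y atTop (𝓝 a)) (htt : Tendsto t atTop (𝓝 t₀))
    (hne : ∀ n, x n ≠ y n) (hge : ∀ n, ω (dist (x n) (y n)) (t n) ≤ |θ (x n) (t n) - θ (y n) (t n)|)
    {h : ℝ} (hh : 0 < h) : ω h t₀ ≤ ‖fderiv ℝ (fun z => θ z t₀) a‖ * h := by
  suffices H : ∀ C > ‖fderiv ℝ (fun z => θ z t₀) a‖, ω h t₀ ≤ C * h by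
    rw [← div_le_iff₀ hh]
    exact le_of_forall_gt_imp_ge_of_dense fun C hC => (div_le_iff₀ hh).2 (H C hC)
  intro C hC
  have hcont := (hθ.continuousOn_fderiv_slice hn).norm (a, t₀) ⟨mem_univ _, ht₀⟩
  obtain ⟨ρ, hρ, hball⟩ := Metric.mem_nhdsWithin_iff.1 (hcont (Iio_mem_nhds hC))
  have hωlim : Tendsto (fun n => ω h (t n)) atTop (𝓝 (ω h t₀)) := by
    have h1 : Tendsto (fun n => (h, t n)) atTop (𝓝[Ici 0 ×ˢ Ici 0] (h, t₀)) :=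
      tendsto_nhdsWithin_iff.2 ⟨tendsto_const_nhds.prodMk_nhds htt,
        .of_forall fun n => ⟨hh.le, ht n⟩⟩
    exact (hωcont (h, t₀) ⟨hh.le, ht₀⟩).tendsto.comp h1
  have hdist : Tendsto (fun n => dist (x n) (y n)) atTop (𝓝 0) := by
    simpa using hxa.dist hya
  refine le_of_tendsto hωlim ?_
  filter_upwards [hxa (Metric.ball_mem_nhds a hρ), hya (Metric.ball_mem_nhds a hρ),
    htt (Metric.ball_mem_nhds t₀ hρ), hdist (Iio_mem_nhds hh)] with n hxn hyn htn hdn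
  have hpos : 0 < dist (x n) (y n) := dist_pos.2 (hne n)
  have hmv : ‖θ (x n) (t n) - θ (y n) (t n)‖ ≤ C * ‖x n - y n‖ :=
    Convex.norm_image_sub_le_of_norm_fderiv_le (𝕜 := ℝ) (f := fun z => θ z (t n))
      (fun z _ => (hθ.contDiff_slice (ht n)).differentiable (by positivity) z)
      (fun z hz => le_of_lt (hball (a := (z, t n))
        ⟨by simpa [Prod.dist_eq] using ⟨hz, htn⟩, ⟨mem_univ _, ht n⟩⟩))
      (convex_ball a ρ) hyn hxn
  rw [Real.norm_eq_abs, ← dist_eq_norm] at hmv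
  obtain ⟨h0, -, -, hconc, -⟩ := hωmoc (t n) (ht n)
  have h1 := hconc.mul_le_mul_of_zero self_mem_Ici h0 hpos (le_of_lt hdn) hpos.le hh.le
  have h2 : ω (dist (x n) (y n)) (t n) * h ≤ C * dist (x n) (y n) * h :=
    mul_le_mul_of_nonneg_right ((hge n).trans hmv) hh.le
  refine le_of_mul_le_mul_right (a := dist (x n) (y n)) ?_ hpos
  calc _ ≤ _ := h1
    _ ≤ _ := h2
    _ = _ := by ring

/-- For a space-periodic `θ`, obeying the modulus of continuity is an open condition forward in
time. -/
theorem eventually_obeys_of_obeys {d : ℕ}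
    {θ : EuclideanSpace ℝ (Fin d) → ℝ → ℝ} {L : ℝ} (hL : 0 < L)
    (hsmooth : ContDiffOn ℝ (⊤ : ℕ∞)
      (fun p : EuclideanSpace ℝ (Fin d) × ℝ => θ p.1 p.2) (univ ×ˢ Ici 0))
    (hper : ∀ v : Fin d → ℤ, ∀ x t, θ (x + WithLp.toLp 2 (fun i => L * (v i : ℝ))) t = θ x t)
    {ω : ℝ → ℝ → ℝ}
    (hωcont : ContinuousOn (fun p : ℝ × ℝ => ω p.1 p.2) (Ici 0 ×ˢ Ici 0))
    (hωmoc : ∀ t ∈ Ici (0:ℝ), IsModulusOfContinuity (fun ξ => ω ξ t))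
    {t₀ : ℝ} (ht₀ : 0 ≤ t₀)
    (hω'' : (∃ b, HasDerivWithinAt (fun r => ω r t₀) b (Ici 0) 0) →
      Tendsto (fun ξ => deriv (deriv (fun r => ω r t₀)) ξ) (𝓝[>] 0) atBot)
    (hobeys : ∀ x y, x ≠ y → |θ x t₀ - θ y t₀| < ω (dist x y) t₀) :
    ∀ᶠ t in 𝓝[≥] t₀, ∀ x y, x ≠ y → |θ x t - θ y t| < ω (dist x y) t := by
  by_contra hnot
  obtain ⟨t, htlim, hfail⟩ := exists_seq_forall_of_frequently
    ((not_eventually.1 hnot).and_eventually self_mem_nhdsWithin)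
  have ht : ∀ n, 0 ≤ t n := fun n => ht₀.trans (hfail n).2
  have htt : Tendsto t atTop (𝓝 t₀) := htlim.mono_right nhdsWithin_le_nhds
  set K : Set (EuclideanSpace ℝ (Fin d)) := {x | ∀ i, x i ∈ Icc (-(2 * L)) (2 * L)}
  have hK : IsCompact K := by
    have h1 := (PiLp.homeomorph 2 (fun _ : Fin d => ℝ)).isCompact_preimage.2
      (isCompact_univ_pi fun _ : Fin d => isCompact_Icc (a := -(2 * L)) (b := 2 * L))
    convert h1 using 1
    ext x
    exact ⟨fun hx i _ => hx i, fun hx i => hx i (mem_univ i)⟩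
  have hpair : ∀ n, ∃ p ∈ K ×ˢ K, p.1 ≠ p.2 ∧
      ω (dist p.1 p.2) (t n) ≤ |θ p.1 (t n) - θ p.2 (t n)| := by
    intro n
    have hn := (hfail n).1
    push Not at hn
    obtain ⟨x, y, hxy, hle⟩ := hn
    obtain ⟨v, w, x', y', hx', hy', hxK, hyK, hdist⟩ := exists_translate_mem_box hL x y
    have hx : θ x' (t n) = θ x (t n) := hx' ▸ hper v x (t n)
    have hy : θ y' (t n) = θ y (t n) := hy' ▸ hper w y (t n)
    obtain ⟨h0, -, hmono, -⟩ := hωmoc (t n) (ht n)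
    refine ⟨(x', y'), ⟨hxK, hyK⟩, fun heq => ?_, ?_⟩
    · have h1 : ω 0 (t n) < ω (dist x y) (t n) :=
        hmono self_mem_Ici dist_nonneg (dist_pos.2 hxy)
      have h2 : θ x (t n) = θ y (t n) := by
        rw [← hx, ← hy, show x' = y' from heq]
      rw [h2, sub_self, abs_zero] at hle
      simp only at h0
      linarith
    · rw [hx, hy]
      exact (hmono.monotoneOn dist_nonneg dist_nonneg hdist).trans hle
  choose p hpK hpne hple using hpair
  obtain ⟨⟨a, b⟩, -, φ, hφ, hlim⟩ := (hK.prod hK).tendsto_subseq hpK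
  have hxa : Tendsto (fun n => (p (φ n)).1) atTop (𝓝 a) := hlim.fst_nhds
  have hyb : Tendsto (fun n => (p (φ n)).2) atTop (𝓝 b) := hlim.snd_nhds
  have htφ : Tendsto (fun n => t (φ n)) atTop (𝓝 t₀) := htt.comp hφ.tendsto_atTop
  rcases eq_or_ne a b with rfl | hab
  · obtain ⟨h, hh, hlt⟩ := (hωmoc t₀ ht₀).exists_norm_fderiv_mul_lt hω''
      ((hsmooth.contDiff_slice ht₀).of_le (WithTop.coe_le_coe.2 le_top)) hobeys a
    exact hlt.not_ge (le_norm_fderiv_mul_of_tendsto (by exact_mod_cast le_top) hsmooth hωcont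
      hωmoc ht₀ (fun n => ht (φ n)) hxa hyb htφ (fun n => hpne _) (fun n => hple _) hh)
  · have hθlim : ∀ {z : ℕ → EuclideanSpace ℝ (Fin d)} {c}, Tendsto z atTop (𝓝 c) →
        Tendsto (fun n => θ (z n) (t (φ n))) atTop (𝓝 (θ c t₀)) := fun {z c} hz =>
      (hsmooth.continuousOn (c, t₀) ⟨mem_univ _, ht₀⟩).tendsto.comp
        (tendsto_nhdsWithin_iff.2 ⟨hz.prodMk_nhds htφ,
          .of_forall fun n => ⟨mem_univ _, ht (φ n)⟩⟩)
    have hωlim : Tendsto (fun n => ω (dist (p (φ n)).1 (p (φ n)).2) (t (φ n))) atTop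
        (𝓝 (ω (dist a b) t₀)) :=
      (hωcont (dist a b, t₀) ⟨dist_nonneg, ht₀⟩).tendsto.comp
        (tendsto_nhdsWithin_iff.2 ⟨(hxa.dist hyb).prodMk_nhds htφ,
          .of_forall fun n => ⟨dist_nonneg, ht (φ n)⟩⟩)
    exact (hobeys a b hab).not_ge
      (le_of_tendsto_of_tendsto' hωlim ((hθlim hxa).sub (hθlim hyb)).abs fun n => hple _)

/-- **Breakthrough scenario lemma (Lemma 2.3).**
If a smooth space-periodic `θ` obeys `ω(·,0)` at time `0` but fails to obey `ω(·,t)` at some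
`t > 0`, then there are a first breakthrough time `t₁ > 0` and points `x ≠ y` such that `θ`
obeys `ω(·,t)` for every `0 ≤ t < t₁` while `θ(x,t₁) − θ(y,t₁) = ω(|x−y|,t₁)`. -/
theorem breakthrough_scenario (d : ℕ) (hd : 0 < d)
    (θ : EuclideanSpace ℝ (Fin d) → ℝ → ℝ) (L : ℝ) (hL : 0 < L)
    (hsmooth : ContDiffOn ℝ (⊤ : ℕ∞)
      (fun p : EuclideanSpace ℝ (Fin d) × ℝ => θ p.1 p.2) (univ ×ˢ Ici 0))
    (hper : ∀ v : Fin d → ℤ, ∀ x t,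
      θ (x + (WithLp.equiv 2 (∀ _ : Fin d, ℝ)).symm (fun i => L * (v i : ℝ))) t = θ x t)
    (ω : ℝ → ℝ → ℝ)
    (hωcont : ContinuousOn (fun p : ℝ × ℝ => ω p.1 p.2) (Ici 0 ×ˢ Ici 0))
    (hωmoc : ∀ t ∈ Ici (0:ℝ), IsModulusOfContinuity (fun ξ => ω ξ t))
    (hω'' : ∀ t ∈ Ici (0:ℝ),
      (∃ b, HasDerivWithinAt (fun r => ω r t) b (Ici 0) 0) →
      Tendsto (fun ξ => deriv (deriv (fun r => ω r t)) ξ) (nhdsWithin 0 (Ioi 0)) atBot)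
    (hobeys0 : ∀ x y, x ≠ y → |θ x 0 - θ y 0| < ω (dist x y) 0)
    (hfail : ∃ t > (0:ℝ), ¬ (∀ x y, x ≠ y → |θ x t - θ y t| < ω (dist x y) t)) :
    ∃ t₁ > (0:ℝ), ∃ x y, x ≠ y ∧
      (∀ t, 0 ≤ t → t < t₁ → ∀ z w, z ≠ w → |θ z t - θ w t| < ω (dist z w) t) ∧
      θ x t₁ - θ y t₁ = ω (dist x y) t₁ := by
  have hopen : ∀ t₀, 0 ≤ t₀ → (∀ x y, x ≠ y → |θ x t₀ - θ y t₀| < ω (dist x y) t₀) →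
      ∀ᶠ t in 𝓝[≥] t₀, ∀ x y, x ≠ y → |θ x t - θ y t| < ω (dist x y) t := fun t₀ ht₀ hob =>
    eventually_obeys_of_obeys hL hsmooth hper hωcont hωmoc ht₀ (hω'' t₀ ht₀) hob
  set T : Set ℝ := {t | 0 ≤ t ∧ ¬ ∀ x y, x ≠ y → |θ x t - θ y t| < ω (dist x y) t}
  have hTne : T.Nonempty := let ⟨t, ht, hf⟩ := hfail; ⟨t, ht.le, hf⟩
  have hTbdd : BddBelow T := ⟨0, fun t ht => ht.1⟩
  set t₁ := sInf T
  have ht₁0 : 0 ≤ t₁ := le_csInf hTne fun t ht => ht.1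
  have hbefore : ∀ t, 0 ≤ t → t < t₁ → ∀ z w, z ≠ w → |θ z t - θ w t| < ω (dist z w) t :=
    fun t ht hlt => by
      by_contra hcon
      exact (notMem_of_lt_csInf hlt hTbdd) ⟨ht, hcon⟩
  have hnot : ¬ ∀ x y, x ≠ y → |θ x t₁ - θ y t₁| < ω (dist x y) t₁ := fun hob => by
    obtain ⟨u, hu, hsub⟩ := mem_nhdsGE_iff_exists_Ico_subset.1 (hopen t₁ ht₁0 hob)
    obtain ⟨t, htT, htu⟩ := exists_lt_of_csInf_lt hTne (show sInf T < u from hu)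
    exact htT.2 (hsub ⟨csInf_le hTbdd htT, htu⟩)
  have ht₁pos : 0 < t₁ := ht₁0.lt_of_ne fun h => hnot (h ▸ hobeys0)
  push Not at hnot
  obtain ⟨x, y, hxy, hge⟩ := hnot
  have hθlim : ∀ z, Tendsto (fun t => θ z t) (𝓝[<] t₁) (𝓝 (θ z t₁)) := fun z => by
    have hcont : ContinuousWithinAt (fun t => θ z t) (Ici 0) t₁ :=
      (hsmooth.continuousOn (z, t₁) ⟨mem_univ _, ht₁0⟩).comp (f := fun t => (z, t))
        (by fun_prop) fun t ht => ⟨mem_univ _, ht⟩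
    exact (hcont.continuousAt (Ici_mem_nhds ht₁pos)).tendsto.mono_left nhdsWithin_le_nhds
  have hωlim : Tendsto (fun t => ω (dist x y) t) (𝓝[<] t₁) (𝓝 (ω (dist x y) t₁)) := by
    have hcont : ContinuousWithinAt (fun t => ω (dist x y) t) (Ici 0) t₁ :=
      (hωcont (dist x y, t₁) ⟨dist_nonneg, ht₁0⟩).comp (f := fun t => (dist x y, t))
        (by fun_prop) fun t ht => ⟨dist_nonneg, ht⟩
    exact (hcont.continuousAt (Ici_mem_nhds ht₁pos)).tendsto.mono_left nhdsWithin_le_nhds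
  have hle : |θ x t₁ - θ y t₁| ≤ ω (dist x y) t₁ := by
    refine le_of_tendsto_of_tendsto ((hθlim x).sub (hθlim y)).abs hωlim ?_
    filter_upwards [Ioo_mem_nhdsLT ht₁pos] with t ht
    exact (hbefore t ht.1.le ht.2 x y hxy).le
  have heq := le_antisymm hle hge
  rcases le_total 0 (θ x t₁ - θ y t₁) with hs | hs
  · exact ⟨t₁, ht₁pos, x, y, hxy, hbefore, by rwa [abs_of_nonneg hs] at heq⟩
  · refine ⟨t₁, ht₁pos, y, x, hxy.symm, hbefore, ?_⟩
    rw [abs_of_nonpos hs, neg_sub] at heq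
    rwa [dist_comm]
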